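/- arXiv:2404.14702 — 5 statements merged into one kernel-verified Lean document; each statement's English description precedes it below -/
import Mathlib

section
/- Positive integers b ≤ c satisfy 1 + b² + c² = 3·b·c if and only if either b = c = 1, or there exists a natural number k with b = Fib(2k+1) and c = Fib(2k+3). (The solutions of the Markov equation with smallest entry 1 correspond exactly to pairs of consecutive odd-index Fibonacci numbers.) -/
/-!
For fixed `a` and `b`, the Markov equation is a monic quadratic in `c` whose two roots have sum
`3ab` and product `a² + b²`. For `a = 1` and `1 < b ≤ c`, the other root `d = 3b - c` satisfies
`0 < d < b`, so replacing `(b, c)` by `(d, b)` (Vieta jumping) descends until `b = 1`, where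
`c ∈ {1, 2}`. The inverse of a descent step is `(b, c) ↦ (c, 3c - b)`, the recurrence obeyed by
every other Fibonacci number. Conversely, for `b = fib (2k + 1)` and `c = fib (2k + 3)` one has
`c - b = fib (2k + 2)`, and the equation in the form `(c - b)² + 1 = bc` is Cassini's identity.
-/

/-- `(a, b, c)` solves the Markov equation. Positivity is not required, so that the equation and
its Vieta involution make sense outside `ℕ`. -/
def IsMarkovTriple {R : Type*} [CommSemiring R] (a b c : R) : Prop :=
  a ^ 2 + b ^ 2 + c ^ 2 = 3 * a * b * c

namespace IsMarkovTriple

section CommSemiring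

variable {R : Type*} [CommSemiring R] {a b c d : R}

theorem one_left_iff : IsMarkovTriple 1 b c ↔ 1 + b ^ 2 + c ^ 2 = 3 * b * c := by
  rw [IsMarkovTriple, one_pow, mul_one]

theorem swap_right (h : IsMarkovTriple a b c) : IsMarkovTriple a c b := by
  unfold IsMarkovTriple at h ⊢
  rw [add_right_comm, h, mul_right_comm]

theorem iff_sq_add_sq_eq_mul [IsCancelAdd R] (hsum : c + d = 3 * a * b) :
    IsMarkovTriple a b c ↔ a ^ 2 + b ^ 2 = c * d := by
  have hprod : 3 * a * b * c = c * d + c ^ 2 := by rw [← hsum]; ring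
  rw [IsMarkovTriple, hprod, add_left_inj]

theorem vieta_jump [IsCancelAdd R] (h : IsMarkovTriple a b c) (hsum : c + d = 3 * a * b) :
    IsMarkovTriple a b d := by
  rw [iff_sq_add_sq_eq_mul ((add_comm d c).trans hsum), mul_comm]
  exact (iff_sq_add_sq_eq_mul hsum).1 h

end CommSemiring

section Nat

variable {a b c : ℕ}

theorem one_one_iff : IsMarkovTriple 1 1 c ↔ c = 1 ∨ c = 2 := by
  rw [one_left_iff]
  constructor
  · intro h
    have hc : c < 3 := by nlinarith
    interval_cases c <;> simp at h ⊢
  · rintro (rfl | rfl) <;> rfl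

theorem exists_vieta_conjugate_lt (h : IsMarkovTriple a b c) (ha : 0 < a) (hab : a ≤ b)
    (hb : 1 < b) (hbc : b ≤ c) : ∃ d, 0 < d ∧ d < b ∧ c + d = 3 * a * b := by
  have hc : c ≤ 3 * a * b := by
    refine Nat.le_of_mul_le_mul_right ?_ (show 0 < c by lia)
    calc c * c ≤ a ^ 2 + b ^ 2 + c * c := Nat.le_add_left _ _
      _ = 3 * a * b * c := by rw [← sq, h]
  obtain ⟨d, hsum⟩ := Nat.exists_eq_add_of_le hc
  have hprod : a ^ 2 + b ^ 2 = c * d := (iff_sq_add_sq_eq_mul hsum.symm).1 h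
  have hd : 0 < d := Nat.pos_of_mul_pos_left (hprod ▸ by positivity : 0 < c * d)
  -- Equivalently `(b - c) * (b - d) < 0`: `b` lies strictly between the two roots.
  have hbetween : b ^ 2 + c * d < b * (c + d) := by
    have ha_sq : a ^ 2 < a * b ^ 2 := by
      rw [sq a]
      exact Nat.mul_lt_mul_of_pos_left (hab.trans_lt (lt_self_pow₀ hb one_lt_two)) ha
    have hb_sq : b ^ 2 ≤ a * b ^ 2 := Nat.le_mul_of_pos_left _ ha
    calc b ^ 2 + c * d = a ^ 2 + 2 * b ^ 2 := by rw [← hprod]; ring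
      _ < 3 * (a * b ^ 2) := by lia
      _ = b * (c + d) := by rw [← hsum]; ring
  have hlt : d < b := by
    by_contra! hle
    have hrearrange : b * d + c * b ≤ b * b + c * d := mul_add_mul_le_mul_add_mul hbc hle
    linarith
  exact ⟨d, hd, hlt, hsum.symm⟩

end Nat

end IsMarkovTriple

theorem fib_add_fib_add_four (n : ℕ) : Nat.fib n + Nat.fib (n + 4) = 3 * Nat.fib (n + 2) := by
  have h₂ := Nat.fib_add_two (n := n)
  have h₃ := Nat.fib_add_two (n := n + 1)
  have h₄ := Nat.fib_add_two (n := n + 2)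
  lia

theorem fib_mul_fib_add_two_of_odd {n : ℕ} (hn : Odd n) :
    Nat.fib n * Nat.fib (n + 2) = Nat.fib (n + 1) ^ 2 + 1 := by
  have hcassini := Int.fib_add_sq_sub_fib_mul_fib_add_two_mul n 1
  rw [mul_one, Int.natAbs_natCast, hn.neg_one_pow, Int.fib_one] at hcassini
  zify
  simp only [← Int.fib_natCast, Nat.cast_add, Nat.cast_one, Nat.cast_ofNat]
  linear_combination -hcassini

theorem isMarkovTriple_one_fib_of_odd {n : ℕ} (hn : Odd n) :
    IsMarkovTriple 1 (Nat.fib n) (Nat.fib (n + 2)) := by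
  have hcassini := fib_mul_fib_add_two_of_odd hn
  rw [IsMarkovTriple.one_left_iff]
  rw [Nat.fib_add_two] at hcassini ⊢
  linarith

theorem IsMarkovTriple.eq_one_or_eq_fib {b c : ℕ} (h : IsMarkovTriple 1 b c) (hb : 0 < b)
    (hbc : b ≤ c) :
    (b = 1 ∧ c = 1) ∨ ∃ k, b = Nat.fib (2 * k + 1) ∧ c = Nat.fib (2 * k + 3) := by
  induction b using Nat.strong_induction_on generalizing c with
  | _ b ih =>
    obtain rfl | hb_gt : b = 1 ∨ 1 < b := by lia
    · obtain rfl | rfl := one_one_iff.1 h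
      · exact .inl ⟨rfl, rfl⟩
      · exact .inr ⟨0, rfl, rfl⟩
    · obtain ⟨d, hd, hlt, hsum⟩ := h.exists_vieta_conjugate_lt one_pos hb hb_gt hbc
      obtain ⟨-, rfl⟩ | ⟨k, rfl, rfl⟩ := ih d hlt (h.vieta_jump hsum).swap_right hd hlt.le
      · exact absurd hb_gt (lt_irrefl 1)
      · have hrec := fib_add_fib_add_four (2 * k + 1)
        exact .inr ⟨k + 1, rfl, by lia⟩

/-- Positive integers `b ≤ c` satisfy `1 + b² + c² = 3bc` if and only if
either `b = c = 1`, or `b = Fib (2k+1)` and `c = Fib (2k+3)` for some `k : ℕ`. -/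
theorem markov_one_iff_consecutive_odd_fib (b c : ℕ) (hb : 0 < b) (hc : 0 < c) (hbc : b ≤ c) :
    1 + b ^ 2 + c ^ 2 = 3 * b * c ↔
      (b = 1 ∧ c = 1) ∨ ∃ k : ℕ, b = Nat.fib (2 * k + 1) ∧ c = Nat.fib (2 * k + 3) := by
  rw [← IsMarkovTriple.one_left_iff]
  constructor
  · intro h
    exact h.eq_one_or_eq_fib hb hbc
  · rintro (⟨rfl, rfl⟩ | ⟨k, rfl, rfl⟩)
    · exact IsMarkovTriple.one_one_iff.2 (.inl rfl)
    · exact isMarkovTriple_one_fib_of_odd (odd_two_mul_add_one k)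
end

section
/- Let r, a ∈ ℤ and let S be the primitive shear along (r,a). Then for every natural number m ≥ 1, the m-th iterate of S satisfies S^m(m·r², m·r·a − 1) = (0, −1). (This is the key computation showing that the nodal integral affine structure glued at a T-vertex of type (1/(mr²))(1, mra−1) is locally isomorphic to a boundary point of ℝ × ℝ≥0.) -/
/-- The primitive shear along `(r, a)`:
`S(u) = u + det((r,a), u) · (r,a)`, i.e.
`S(x,y) = (x + (r·y − a·x)·r, y + (r·y − a·x)·a)`. -/
def primitiveShear (r a : ℤ) : ℤ × ℤ → ℤ × ℤ :=
  fun p => (p.1 + (r * p.2 - a * p.1) * r, p.2 + (r * p.2 - a * p.1) * a)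

/-!
The shear is the transvection `u ↦ u + det(v, u) • v` with `v = (r, a)`. As `det(v, v) = 0`, its
`m`-th iterate is `u ↦ u + m • det(v, u) • v`. The vector `m • r • v + (0, -1)` has determinant
`-r` against `v`, so the `m`-th iterate subtracts exactly `m • r • v` from it.
-/

theorem transvection_iterate_apply {R V : Type*} [Semiring R] [AddCommMonoid V] [Module R V]
    {f : Module.Dual R V} {v : V} (hv : f v = 0) (n : ℕ) (x : V) :
    (LinearMap.transvection f v)^[n] x = x + n • f x • v := by
  induction n with
  | zero => simp
  | succ n ih =>
    have hker : f (n • f x • v) = 0 := by simp [hv]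
    rw [Function.iterate_succ_apply', ih, LinearMap.transvection.apply, map_add, hker, add_zero,
      succ_nsmul, add_assoc]

section detForm

variable {R : Type*} [CommRing R]

/-- The linear form `u ↦ det (v, u)` on the plane `R × R`, with `v` as first column. -/
def detForm (v : R × R) : Module.Dual R (R × R) :=
  v.1 • LinearMap.snd R R R - v.2 • LinearMap.fst R R R

theorem detForm_apply (v u : R × R) : detForm v u = v.1 * u.2 - v.2 * u.1 :=
  rfl

theorem detForm_self (v : R × R) : detForm v v = 0 := by
  rw [detForm_apply, mul_comm, sub_self]

theorem detForm_smul_self_add (v u : R × R) (c : R) : detForm v (c • v + u) = detForm v u := by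
  rw [map_add, map_smul, detForm_self, smul_zero, zero_add]

end detForm

theorem primitiveShear_eq_transvection (r a : ℤ) :
    primitiveShear r a = LinearMap.transvection (detForm (r, a)) (r, a) :=
  rfl

theorem primitiveShear_iterate_apply (r a : ℤ) (m : ℕ) (u : ℤ × ℤ) :
    (primitiveShear r a)^[m] u = u + m • detForm (r, a) u • (r, a) := by
  rw [primitiveShear_eq_transvection, transvection_iterate_apply (detForm_self _)]

/-- For every `m ≥ 1`, the `m`-th iterate of the primitive shear along `(r,a)` sends
`(m·r², m·r·a − 1)` to `(0, −1)`. -/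
theorem primitiveShear_iterate_eq_neg_one (r a : ℤ) (m : ℕ) (hm : 1 ≤ m) :
    (primitiveShear r a)^[m] ((m : ℤ) * r ^ 2, (m : ℤ) * r * a - 1) = (0, -1) := by
  have hdecomp : ((m : ℤ) * r ^ 2, (m : ℤ) * r * a - 1) = ((m : ℤ) * r) • (r, a) + (0, -1) := by
    ext <;> simp only [Prod.smul_mk, Prod.mk_add_mk, smul_eq_mul] <;> ring
  have hdet : detForm (r, a) (0, -1) = -r := by simp [detForm_apply]
  calc (primitiveShear r a)^[m] ((m : ℤ) * r ^ 2, (m : ℤ) * r * a - 1)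
      = ((m : ℤ) * r) • (r, a) + (0, -1) + m • -r • (r, a) := by
        rw [hdecomp, primitiveShear_iterate_apply, detForm_smul_self_add, hdet]
    _ = (0, -1) := by module
end

section
/- Define S : ℝ → ℝ by S(x) = (6x − 1)/x. Then: (i) S maps the interval (1,∞) into (5,6) and fixes 3 + 2√2; (ii) the images S^k([6,∞)) of the interval [6,∞) under the k-th iterates of S, for k ∈ ℕ, are pairwise disjoint; and (iii) their union over all k ∈ ℕ equals the open interval (3 + 2√2, ∞). -/
open Set Function

/-- The "shift" map `S(x) = (6x − 1)/x` arising in the classification of perfect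
exceptional classes of the first Hirzebruch surface. -/
noncomputable def shiftMap : ℝ → ℝ := fun x => (6 * x - 1) / x

/-!
Let `p` be the larger fixed point of `S`. Since `S` maps `(p, ∞)` bijectively onto `(p, 6)`, the
ray `[6, ∞)` is a fundamental domain: its `k`-th iterated image is the `k`-th gap in the
decreasing sequence `S^k (p, ∞)`. The gaps are disjoint and fill `(p, ∞)` up to the intersection of
the sequence, which is empty because `S` contracts towards `p`.
-/

section ImagesUnderIteration

lemma iUnion_sdiff_succ_of_antitone {α : Type*} {A : ℕ → Set α} (hA : Antitone A) :
    ⋃ k, A k \ A (k + 1) = A 0 \ ⋂ k, A k := by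
  ext y
  simp only [mem_iUnion, mem_sdiff, mem_iInter]
  constructor
  · rintro ⟨k, hyk, hy_succ⟩
    exact ⟨hA k.zero_le hyk, fun hy => hy_succ (hy (k + 1))⟩
  · rintro ⟨hy_zero, hy⟩
    by_contra! hstep
    refine hy fun k => ?_
    induction k with
    | zero => exact hy_zero
    | succ k ih => exact hstep k ih

variable {α : Type*} {f : α → α} {s : Set α}

lemma antitone_image_iterate (hs : MapsTo f s s) : Antitone fun k : ℕ => f^[k] '' s := by
  simp only [image_iterate_eq]
  exact Monotone.antitone_iterate_of_map_le monotone_image hs.image_subset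

lemma image_iterate_sdiff_image (hf : InjOn f s) (hs : MapsTo f s s) (k : ℕ) :
    f^[k] '' (s \ f '' s) = f^[k] '' s \ f^[k + 1] '' s := by
  rw [(hf.iterate hs k).image_sdiff_subset hs.image_subset, iterate_succ, image_comp]

lemma pairwise_disjoint_image_iterate_sdiff_image (hf : InjOn f s) (hs : MapsTo f s s) :
    Pairwise (Disjoint on fun k : ℕ => f^[k] '' (s \ f '' s)) := by
  refine (pairwise_disjoint_on _).2 fun k l hkl => ?_
  simp only [image_iterate_sdiff_image hf hs]
  exact disjoint_sdiff_left.mono_right (sdiff_subset.trans (antitone_image_iterate hs hkl))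

lemma iUnion_image_iterate_sdiff_image (hf : InjOn f s) (hs : MapsTo f s s) :
    ⋃ k : ℕ, f^[k] '' (s \ f '' s) = s \ ⋂ k : ℕ, f^[k] '' s := by
  simp only [image_iterate_sdiff_image hf hs]
  simpa only [iterate_zero, image_id] using
    iUnion_sdiff_succ_of_antitone (antitone_image_iterate hs)

end ImagesUnderIteration

section Contraction

lemma dist_iterate_le_pow_mul_dist {X : Type*} [PseudoMetricSpace X] {f : X → X} {s : Set X}
    {p : X} {K : ℝ} (hK : 0 ≤ K) (hs : MapsTo f s s)
    (hf : ∀ x ∈ s, dist (f x) p ≤ K * dist x p) (k : ℕ) {x : X} (hx : x ∈ s) :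
    dist (f^[k] x) p ≤ K ^ k * dist x p := by
  induction k with
  | zero => simp
  | succ k ih =>
    calc dist (f^[k + 1] x) p = dist (f (f^[k] x)) p := by rw [iterate_succ_apply']
      _ ≤ K * dist (f^[k] x) p := hf _ (hs.iterate k hx)
      _ ≤ K * (K ^ k * dist x p) := by gcongr
      _ = K ^ (k + 1) * dist x p := by ring

lemma iInter_image_iterate_subset_singleton {X : Type*} [MetricSpace X] {f : X → X} {s : Set X}
    {p : X} {K : ℝ} (hK₀ : 0 ≤ K) (hK₁ : K < 1) (hs : MapsTo f s s)
    (hf : ∀ x ∈ s, dist (f x) p ≤ K * dist x p) (hbdd : Bornology.IsBounded (f '' s)) :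
    ⋂ k : ℕ, f^[k] '' s ⊆ {p} := by
  intro y hy
  obtain ⟨R, hR⟩ := hbdd.subset_closedBall p
  have hdist : ∀ k : ℕ, dist y p ≤ K ^ k * R := by
    intro k
    obtain ⟨x, hx, rfl⟩ := mem_iInter.1 hy (k + 1)
    calc dist (f^[k + 1] x) p = dist (f^[k] (f x)) p := by rw [iterate_succ_apply]
      _ ≤ K ^ k * dist (f x) p := dist_iterate_le_pow_mul_dist hK₀ hs hf k (hs hx)
      _ ≤ K ^ k * R := by gcongr; exact hR (mem_image_of_mem f hx)
  have hlim : Filter.Tendsto (fun k : ℕ => K ^ k * R) Filter.atTop (nhds 0) := by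
    simpa only [zero_mul] using (tendsto_pow_atTop_nhds_zero_of_lt_one hK₀ hK₁).mul_const R
  exact dist_le_zero.1 (ge_of_tendsto' hlim hdist)

end Contraction

section ShiftMap

lemma shiftMap_eq_six_sub_inv {x : ℝ} (hx : x ≠ 0) : shiftMap x = 6 - x⁻¹ := by
  rw [shiftMap, sub_div, mul_div_cancel_right₀ 6 hx, one_div]

lemma shiftMap_sub_shiftMap {x y : ℝ} (hx : x ≠ 0) (hy : y ≠ 0) :
    shiftMap x - shiftMap y = (x - y) / (x * y) := by
  rw [shiftMap_eq_six_sub_inv hx, shiftMap_eq_six_sub_inv hy, sub_sub_sub_cancel_left,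
    inv_sub_inv hy hx, mul_comm y x]

lemma injOn_shiftMap : InjOn shiftMap {0}ᶜ := by
  intro x hx y hy hxy
  rw [shiftMap_eq_six_sub_inv hx, shiftMap_eq_six_sub_inv hy] at hxy
  exact inv_injective (sub_right_injective hxy)

lemma image_shiftMap_Ioi {a : ℝ} (ha : 0 < a) : shiftMap '' Ioi a = Ioo (shiftMap a) 6 := by
  have hcongr : EqOn shiftMap (fun x => 6 - x⁻¹) (Ioi a) := fun x hx =>
    shiftMap_eq_six_sub_inv (ha.trans hx).ne'
  calc shiftMap '' Ioi a = (fun x => 6 - x) '' (Inv.inv '' Ioi a) := by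
        rw [hcongr.image_eq, image_image]
    _ = (fun x => 6 - x) '' Ioo 0 a⁻¹ := by rw [image_inv_eq_inv, inv_Ioi₀ ha]
    _ = Ioo (shiftMap a) 6 := by
        rw [image_const_sub_Ioo, sub_zero, shiftMap_eq_six_sub_inv ha.ne']

lemma shiftMap_mem_Ioo {x : ℝ} (hx : 1 < x) : shiftMap x ∈ Ioo 5 6 := by
  have hone : shiftMap 1 = 5 := by norm_num [shiftMap]
  rw [← hone, ← image_shiftMap_Ioi one_pos]
  exact mem_image_of_mem shiftMap hx

lemma isFixedPt_shiftMap_three_add_two_mul_sqrt_two : IsFixedPt shiftMap (3 + 2 * √2) := by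
  have hpos : 0 < 3 + 2 * √2 := by positivity
  rw [IsFixedPt, shiftMap, div_eq_iff hpos.ne']
  linear_combination -4 * Real.sq_sqrt (zero_le_two (α := ℝ))

variable {p : ℝ}

lemma dist_shiftMap_le_inv_sq_mul_dist (hfix : IsFixedPt shiftMap p) (hp : 0 < p) {x : ℝ}
    (hx : p ≤ x) : dist (shiftMap x) p ≤ (p ^ 2)⁻¹ * dist x p := by
  have hx₀ : 0 < x := hp.trans_le hx
  calc dist (shiftMap x) p = |shiftMap x - shiftMap p| := by rw [hfix.eq, Real.dist_eq]
    _ = dist x p / (x * p) := by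
        rw [shiftMap_sub_shiftMap hx₀.ne' hp.ne', abs_div, abs_of_pos (mul_pos hx₀ hp),
          Real.dist_eq]
    _ ≤ dist x p / (p * p) := by gcongr
    _ = (p ^ 2)⁻¹ * dist x p := by rw [div_eq_inv_mul, sq]

lemma image_shiftMap_Ioi_of_isFixedPt (hfix : IsFixedPt shiftMap p) (hp : 0 < p) :
    shiftMap '' Ioi p = Ioo p 6 := by
  rw [image_shiftMap_Ioi hp, hfix.eq]

lemma mapsTo_shiftMap_Ioi (hfix : IsFixedPt shiftMap p) (hp : 0 < p) :
    MapsTo shiftMap (Ioi p) (Ioi p) := by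
  rw [mapsTo_iff_image_subset, image_shiftMap_Ioi_of_isFixedPt hfix hp]
  exact Ioo_subset_Ioi_self

lemma Ioi_sdiff_image_shiftMap (hfix : IsFixedPt shiftMap p) (hp : 0 < p) :
    Ioi p \ shiftMap '' Ioi p = Ici 6 := by
  have hp₆ : p < 6 := by
    calc p = 6 - p⁻¹ := by rw [← shiftMap_eq_six_sub_inv hp.ne', hfix.eq]
      _ < 6 := sub_lt_self 6 (inv_pos.2 hp)
  rw [image_shiftMap_Ioi_of_isFixedPt hfix hp]
  ext x
  simp only [mem_sdiff, mem_Ioi, mem_Ioo, mem_Ici]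
  grind

lemma iInter_image_iterate_shiftMap_Ioi (hfix : IsFixedPt shiftMap p) (hp : 1 < p) :
    ⋂ k : ℕ, shiftMap^[k] '' Ioi p = ∅ := by
  have hp₀ : 0 < p := one_pos.trans hp
  have hbdd : Bornology.IsBounded (shiftMap '' Ioi p) := by
    rw [image_shiftMap_Ioi_of_isFixedPt hfix hp₀]
    exact Metric.isBounded_Ioo p 6
  have hsub : ⋂ k : ℕ, shiftMap^[k] '' Ioi p ⊆ {p} :=
    iInter_image_iterate_subset_singleton (by positivity)
      (inv_lt_one_of_one_lt₀ (one_lt_pow₀ hp two_ne_zero)) (mapsTo_shiftMap_Ioi hfix hp₀)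
      (fun x hx => dist_shiftMap_le_inv_sq_mul_dist hfix hp₀ (le_of_lt hx)) hbdd
  refine eq_empty_of_forall_notMem fun y hy => ?_
  have hpy : y ∈ Ioi p := by simpa using mem_iInter.1 hy 0
  exact ne_of_gt hpy (hsub hy)

end ShiftMap

/-- The shift map `S(x) = (6x−1)/x` maps `(1,∞)` into `(5,6)` and fixes `3 + 2√2`;
the iterated images `S^[k] '' [6,∞)` are pairwise disjoint, and their union over all
`k : ℕ` is the open interval `(3 + 2√2, ∞)`. -/
theorem shiftMap_properties :
    (∀ x : ℝ, 1 < x → shiftMap x ∈ Set.Ioo (5 : ℝ) 6) ∧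
    shiftMap (3 + 2 * Real.sqrt 2) = 3 + 2 * Real.sqrt 2 ∧
    (∀ k l : ℕ, k ≠ l →
      Disjoint (shiftMap^[k] '' Set.Ici (6 : ℝ)) (shiftMap^[l] '' Set.Ici (6 : ℝ))) ∧
    (⋃ k : ℕ, shiftMap^[k] '' Set.Ici (6 : ℝ)) = Set.Ioi (3 + 2 * Real.sqrt 2) := by
  have hfix := isFixedPt_shiftMap_three_add_two_mul_sqrt_two
  have hp : 1 < 3 + 2 * √2 := by linarith [Real.sqrt_nonneg 2]
  have hp₀ : 0 < 3 + 2 * √2 := one_pos.trans hp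
  have hmaps := mapsTo_shiftMap_Ioi hfix hp₀
  have hinj : InjOn shiftMap (Ioi (3 + 2 * √2)) :=
    injOn_shiftMap.mono fun x hx => (hp₀.trans hx).ne'
  rw [← Ioi_sdiff_image_shiftMap hfix hp₀]
  refine ⟨fun x => shiftMap_mem_Ioo, hfix, ?_, ?_⟩
  · exact fun k l hkl => pairwise_disjoint_image_iterate_sdiff_image hinj hmaps hkl
  · rw [iUnion_image_iterate_sdiff_image hinj hmaps, iInter_image_iterate_shiftMap_Ioi hfix hp,
      sdiff_empty]
end

section
/- Define g : ℕ → ℤ by g(0) = 1, g(1) = 1, g(2) = 1, g(3) = 3 and g(k+4) = 6·g(k+2) − g(k); define the Pell numbers P by P(0) = 0, P(1) = 1, P(n+2) = 2·P(n+1) + P(n), and the half-companion Pell numbers H by H(0) = 1, H(1) = 1, H(n+2) = 2·H(n+1) + H(n). Then for every natural number j, g(2j+2) = P(2j+1) and g(2j+1) = H(2j). (The even-index entries of the sequence governing the staircase of CP¹(2) × CP¹(2) are the odd-index Pell numbers and the odd-index entries are the even-index half-companion Pell numbers.) -/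
/-- The sequence controlling the staircase of `ℂP¹(2) × ℂP¹(2)`:
seeds `1, 1, 1, 3` and recursion `g (k+4) = 6 · g (k+2) − g k`. -/
def gP1P1 : ℕ → ℤ
  | 0 => 1
  | 1 => 1
  | 2 => 1
  | 3 => 3
  | n + 4 => 6 * gP1P1 (n + 2) - gP1P1 n

/-- The Pell numbers: `P 0 = 0`, `P 1 = 1`, `P (n+2) = 2 · P (n+1) + P n`. -/
def pell : ℕ → ℤ
  | 0 => 0
  | 1 => 1
  | n + 2 => 2 * pell (n + 1) + pell n

/-- The half-companion Pell numbers: `H 0 = 1`, `H 1 = 1`,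
`H (n+2) = 2 · H (n+1) + H n`. -/
def halfPell : ℕ → ℤ
  | 0 => 1
  | 1 => 1
  | n + 2 => 2 * halfPell (n + 1) + halfPell n

/-!
A sequence satisfying `u (n + 2) = a * u (n + 1) + b * u n` has `X ^ 2 - a * X - b` as
characteristic polynomial. The squares of its roots are the roots of
`X ^ 2 - (a ^ 2 + 2 * b) * X + b ^ 2`, which therefore governs every second term of `u`. For
`a = 2` and `b = 1` this is `X ^ 2 - 6 * X + 1`, the polynomial governing every second term of
`gP1P1`, so only two initial values of each subsequence have to be compared.
-/

theorem add_four_eq_of_add_two_eq {R : Type*} [CommRing R] {a b : R} {u : ℕ → R}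
    (hu : ∀ n, u (n + 2) = a * u (n + 1) + b * u n) (n : ℕ) :
    u (n + 4) = (a ^ 2 + 2 * b) * u (n + 2) - b ^ 2 * u n := by
  linear_combination hu (n + 2) + a * hu (n + 1) - b * hu n

theorem eq_of_add_two_eq {α : Type*} {f : α → α → α} {u v : ℕ → α}
    (hu : ∀ n, u (n + 2) = f (u (n + 1)) (u n)) (hv : ∀ n, v (n + 2) = f (v (n + 1)) (v n))
    (h_zero : u 0 = v 0) (h_one : u 1 = v 1) (n : ℕ) : u n = v n := by
  induction n using Nat.twoStepInduction with
  | zero => exact h_zero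
  | one => exact h_one
  | more n ih ih_succ => rw [hu, hv, ih, ih_succ]

theorem gP1P1_add_four (n : ℕ) : gP1P1 (n + 4) = 6 * gP1P1 (n + 2) - gP1P1 n := by
  rw [gP1P1]

theorem pell_add_two (n : ℕ) : pell (n + 2) = 2 * pell (n + 1) + pell n := by
  rw [pell]

theorem halfPell_add_two (n : ℕ) :
    halfPell (n + 2) = 2 * halfPell (n + 1) + halfPell n := by
  rw [halfPell]

theorem pell_add_four (n : ℕ) : pell (n + 4) = 6 * pell (n + 2) - pell n := by
  linear_combination add_four_eq_of_add_two_eq (a := 2) (b := 1) (u := pell)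
    (fun m ↦ by rw [pell_add_two, one_mul]) n

theorem halfPell_add_four (n : ℕ) :
    halfPell (n + 4) = 6 * halfPell (n + 2) - halfPell n := by
  linear_combination add_four_eq_of_add_two_eq (a := 2) (b := 1) (u := halfPell)
    (fun m ↦ by rw [halfPell_add_two, one_mul]) n

theorem gP1P1_two_mul_add_two (j : ℕ) : gP1P1 (2 * j + 2) = pell (2 * j + 1) :=
  eq_of_add_two_eq (f := fun x y ↦ 6 * x - y)
    (u := fun i ↦ gP1P1 (2 * i + 2)) (v := fun i ↦ pell (2 * i + 1))
    (fun i ↦ gP1P1_add_four (2 * i + 2)) (fun i ↦ pell_add_four (2 * i + 1))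
    (by simp [gP1P1, pell]) (by simp [gP1P1, pell]) j

theorem gP1P1_two_mul_add_one (j : ℕ) : gP1P1 (2 * j + 1) = halfPell (2 * j) :=
  eq_of_add_two_eq (f := fun x y ↦ 6 * x - y)
    (u := fun i ↦ gP1P1 (2 * i + 1)) (v := fun i ↦ halfPell (2 * i))
    (fun i ↦ gP1P1_add_four (2 * i + 1)) (fun i ↦ halfPell_add_four (2 * i))
    (by simp [gP1P1, halfPell]) (by simp [gP1P1, halfPell]) j

/-- The even-index entries of the sequence governing the staircase of
`ℂP¹(2) × ℂP¹(2)` are the odd-index Pell numbers, and the odd-index entries are the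
even-index half-companion Pell numbers. -/
theorem gP1P1_eq_pell (j : ℕ) :
    gP1P1 (2 * j + 2) = pell (2 * j + 1) ∧ gP1P1 (2 * j + 1) = halfPell (2 * j) :=
  ⟨gP1P1_two_mul_add_two j, gP1P1_two_mul_add_one j⟩
end

section
/- Let p, q, t be integers with t² = p² − 6pq + q² + 8. Then it is not the case that 8 divides both 3(p+q) + t and 3(p+q) − t. (Hence for each pair (p,q) at most one choice of sign ε ∈ {±1} makes d = (3(p+q) + εt)/8 an integer, so the data (d,m) of a perfect exceptional class in the first Hirzebruch surface is uniquely determined by (p,q), and the map Perf(F₁) → ℚ, (p,q,d,m) ↦ p/q, is injective.) -/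
/-!
Eliminating `m` from `3d - m = p + q` and `d² - m² = pq - 1` leaves a quadratic equation for `d`
whose two roots are `(3(p+q) ± t)/8`. Their sum is `3(p+q)/4` and their product is
`((p+q)² + pq - 1)/8`. If both roots are integers, then `4 ∣ p + q` and
`8 ∣ (p+q)² + pq - 1`, so modulo `4` we get `q = -p` and `pq = 1`, which makes `-1` a square
modulo `4`.
-/

section CommRing

variable {R : Type*} [CommRing R] {n p q t : R}

theorem three_mul_add_mul_three_mul_sub_eq (ht : t ^ 2 = p ^ 2 - 6 * p * q + q ^ 2 + 8) :
    (3 * (p + q) + t) * (3 * (p + q) - t) = 8 * ((p + q) ^ 2 + (p * q - 1)) := by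
  linear_combination -ht

theorem dvd_sq_add_one_of_dvd_add_of_dvd_mul_sub_one (h_add : n ∣ p + q)
    (h_mul : n ∣ p * q - 1) : n ∣ p ^ 2 + 1 := by
  have h_eq : p * (p + q) - (p * q - 1) = p ^ 2 + 1 := by ring
  exact h_eq ▸ dvd_sub (h_add.mul_left p) h_mul

end CommRing

theorem not_four_dvd_sq_add_one (a : ℤ) : ¬4 ∣ a ^ 2 + 1 := by
  have h_zmod : ∀ x : ZMod 4, x ^ 2 + 1 ≠ 0 := by decide
  intro h
  exact h_zmod a (mod_cast (ZMod.intCast_zmod_eq_zero_iff_dvd (a ^ 2 + 1) 4).2 h)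

/-- If `p, q, t` are integers with `t² = p² − 6pq + q² + 8`, then `8` cannot divide
both `3(p+q) + t` and `3(p+q) − t`. Hence at most one sign `ε ∈ {±1}` makes
`(3(p+q) + εt)/8` an integer. -/
theorem not_both_signs_divisible (p q t : ℤ)
    (ht : t ^ 2 = p ^ 2 - 6 * p * q + q ^ 2 + 8) :
    ¬((8 ∣ 3 * (p + q) + t) ∧ (8 ∣ 3 * (p + q) - t)) := by
  rintro ⟨h_plus, h_minus⟩
  have h_add : 4 ∣ p + q := by omega
  have h_prod : 8 ∣ (p + q) ^ 2 + (p * q - 1) := by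
    have h := mul_dvd_mul h_plus h_minus
    rw [three_mul_add_mul_three_mul_sub_eq ht] at h
    exact Int.dvd_of_mul_dvd_mul_left (by decide) h
  have h_mul : 4 ∣ p * q - 1 :=
    (dvd_add_right (dvd_pow h_add two_ne_zero)).1 (dvd_trans (by decide) h_prod)
  exact not_four_dvd_sq_add_one p (dvd_sq_add_one_of_dvd_add_of_dvd_mul_sub_one h_add h_mul)
end
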